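/- For all natural numbers n and k with n ≥ k ≥ 1, the integer quotient C(n, k) / [n, k] satisfies the identity C(n, k) / [n, k] = g_{k−1}(n−k+1) / g_{k−1}(1), where g_{k−1}(m) := m(m+1)⋯(m+k−1) / lcm(m, m+1, …, m+k−1). -/

import Mathlib

/-- `rangeLcm a b` is `lcm(a, a+1, …, b)`. -/
def rangeLcm (a b : ℕ) : ℕ := (Finset.Icc a b).lcm id

/-- The lcm-binomial number `[n, k] = lcm(n, n-1, …, n-k+1) / lcm(1, 2, …, k)`. -/
def lcmBinom (n k : ℕ) : ℕ := rangeLcm (n - k + 1) n / rangeLcm 1 k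

/-- Farhi's arithmetic function `g_j(m) = m(m+1)⋯(m+j) / lcm(m, m+1, …, m+j)`. -/
def farhiG (j m : ℕ) : ℕ := (∏ i ∈ Finset.Icc m (m + j), i) / rangeLcm m (m + j)

/-!
Write `L = lcm(n-k+1, …, n)` and `L₁ = lcm(1, …, k)`. Among `k` consecutive integers there is a
multiple of every `i ≤ k`, so `L₁ ∣ L` and `[n, k]` is the exact quotient. Both sides of
`k! * C(n, k) = (n-k+1) ⋯ n` factor through these lcms, as `L₁ * g_{k-1}(1) * C(n, k)` and
`L * g_{k-1}(n-k+1) = L₁ * [n, k] * g_{k-1}(n-k+1)`; cancelling `L₁` gives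
`C(n, k) * g_{k-1}(1) = [n, k] * g_{k-1}(n-k+1)`.
-/

theorem prod_Icc_eq_ascFactorial (m j : ℕ) :
    ∏ i ∈ Finset.Icc m (m + j), i = m.ascFactorial (j + 1) := by
  rw [← Finset.Ico_add_one_right_eq_Icc, Finset.prod_Ico_eq_prod_range, add_assoc,
    Nat.add_sub_cancel_left, Nat.ascFactorial_eq_prod_range]

theorem exists_mem_Icc_dvd {i k : ℕ} (m : ℕ) (hi : 0 < i) (hik : i ≤ k) :
    ∃ x ∈ Finset.Icc (m + 1) (m + k), i ∣ x := by
  refine ⟨i * (m / i + 1), Finset.mem_Icc.mpr ⟨Nat.lt_mul_div_succ m hi, ?_⟩, dvd_mul_right _ _⟩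
  rw [mul_add_one]
  exact add_le_add (Nat.mul_div_le m i) hik

theorem rangeLcm_one_dvd_rangeLcm (m k : ℕ) : rangeLcm 1 k ∣ rangeLcm (m + 1) (m + k) := by
  refine Finset.lcm_dvd fun i hi ↦ ?_
  obtain ⟨hi_pos, hik⟩ := Finset.mem_Icc.mp hi
  obtain ⟨x, hx, hix⟩ := exists_mem_Icc_dvd m hi_pos hik
  exact hix.trans (Finset.dvd_lcm (f := id) hx)

theorem rangeLcm_dvd_prod_Icc (a b : ℕ) : rangeLcm a b ∣ ∏ i ∈ Finset.Icc a b, i :=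
  Finset.lcm_dvd fun _ hi ↦ Finset.dvd_prod_of_mem id hi

theorem rangeLcm_pos {a : ℕ} (b : ℕ) (ha : 0 < a) : 0 < rangeLcm a b :=
  Nat.pos_of_ne_zero <| Finset.lcm_ne_zero_iff.mpr fun _ hi ↦
    (ha.trans_le (Finset.mem_Icc.mp hi).1).ne'

theorem rangeLcm_mul_farhiG (j m : ℕ) :
    rangeLcm m (m + j) * farhiG j m = m.ascFactorial (j + 1) := by
  rw [farhiG, Nat.mul_div_cancel' (rangeLcm_dvd_prod_Icc _ _), prod_Icc_eq_ascFactorial]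

theorem farhiG_pos {m : ℕ} (j : ℕ) (hm : 0 < m) : 0 < farhiG j m := by
  obtain ⟨m, rfl⟩ := Nat.exists_eq_add_one.mpr hm
  refine Nat.pos_of_mul_pos_left (a := rangeLcm (m + 1) (m + 1 + j)) ?_
  rw [rangeLcm_mul_farhiG]
  exact Nat.ascFactorial_pos m (j + 1)

theorem rangeLcm_one_mul_lcmBinom {n k : ℕ} (h : k ≤ n) :
    rangeLcm 1 k * lcmBinom n k = rangeLcm (n - k + 1) n := by
  refine Nat.mul_div_cancel' ?_
  simpa only [Nat.sub_add_cancel h] using rangeLcm_one_dvd_rangeLcm (n - k) k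

theorem lcmBinom_pos {n k : ℕ} (h : k ≤ n) : 0 < lcmBinom n k := by
  refine Nat.pos_of_mul_pos_left (a := rangeLcm 1 k) ?_
  rw [rangeLcm_one_mul_lcmBinom h]
  exact rangeLcm_pos n (n - k).succ_pos

theorem choose_mul_farhiG_one {n j : ℕ} (h : j + 1 ≤ n) :
    n.choose (j + 1) * farhiG j 1 = lcmBinom n (j + 1) * farhiG j (n - (j + 1) + 1) := by
  have hn : n - (j + 1) + 1 + j = n := by omega
  apply Nat.eq_of_mul_eq_mul_left (rangeLcm_pos (j + 1) one_pos)
  calc rangeLcm 1 (j + 1) * (n.choose (j + 1) * farhiG j 1)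
      = rangeLcm 1 (1 + j) * farhiG j 1 * n.choose (j + 1) := by rw [add_comm 1 j]; ring
    _ = (j + 1).factorial * n.choose (j + 1) := by
        rw [rangeLcm_mul_farhiG, Nat.one_ascFactorial]
    _ = (n - (j + 1) + 1).ascFactorial (j + 1) := by
        rw [Nat.ascFactorial_eq_factorial_mul_choose, Nat.sub_add_cancel h]
    _ = rangeLcm (n - (j + 1) + 1) n * farhiG j (n - (j + 1) + 1) := by
        rw [← rangeLcm_mul_farhiG, hn]
    _ = rangeLcm 1 (j + 1) * (lcmBinom n (j + 1) * farhiG j (n - (j + 1) + 1)) := by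
        rw [← rangeLcm_one_mul_lcmBinom h, mul_assoc]

/-- For `n ≥ k ≥ 1`, `C(n, k) / [n, k] = g_{k-1}(n-k+1) / g_{k-1}(1)`. -/
theorem choose_div_lcmBinom_eq (n k : ℕ) (hk : 1 ≤ k) (h : k ≤ n) :
    n.choose k / lcmBinom n k = farhiG (k - 1) (n - k + 1) / farhiG (k - 1) 1 := by
  obtain ⟨j, rfl⟩ := Nat.exists_eq_add_of_le' hk
  rw [Nat.add_sub_cancel]
  calc n.choose (j + 1) / lcmBinom n (j + 1)
      = n.choose (j + 1) * farhiG j 1 / (lcmBinom n (j + 1) * farhiG j 1) :=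
        (Nat.mul_div_mul_right _ _ (farhiG_pos j one_pos)).symm
    _ = lcmBinom n (j + 1) * farhiG j (n - (j + 1) + 1) / (lcmBinom n (j + 1) * farhiG j 1) := by
        rw [choose_mul_farhiG_one h]
    _ = farhiG j (n - (j + 1) + 1) / farhiG j 1 := Nat.mul_div_mul_left _ _ (lcmBinom_pos h)
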